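/- For every β > 0 there exists α < 1 such that for every sufficiently large n, there exist a set A ⊆ {1,...,n} with |A| ≥ n − n^α and a coloring c : A → {1,...,⌊n^β⌋} such that every 3-term arithmetic progression contained in A is rainbow, i.e., whenever a, a+t, a+2t ∈ A with t ≠ 0, the three values c(a), c(a+t), c(a+2t) are pairwise distinct. -/

import Mathlib

/-- Greedy colouring. -/
lemma greedy_col {V : Type*} [Fintype V] [DecidableEq V] (r : V → V → Prop) [DecidableRel r]
    (hs : ∀ x y, r x y → r y x) (D : ℕ)
    (h : ∀ x, (Finset.univ.filter (fun y => r x y)).card ≤ D) :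
    ∃ c : V → Fin (D + 1), ∀ x y, x ≠ y → r x y → c x ≠ c y := by
  have key : ∀ s : Finset V, ∃ c : V → Fin (D + 1),
      ∀ x ∈ s, ∀ y ∈ s, x ≠ y → r x y → c x ≠ c y := by
    intro s
    induction s using Finset.induction_on with
    | empty => exact ⟨fun _ => 0, by simp⟩
    | insert a s ha ih =>
      obtain ⟨c, hc⟩ := ih
      have hlt : ((Finset.univ.filter (fun y => r a y)).image c).card
          < (Finset.univ : Finset (Fin (D + 1))).card := by
        rw [Finset.card_univ, Fintype.card_fin]
        exact lt_of_le_of_lt (Finset.card_image_le.trans (h a)) (Nat.lt_succ_self D)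
      obtain ⟨e, -, he⟩ := Finset.exists_mem_notMem_of_card_lt_card hlt
      have he' : ∀ y, r a y → c y ≠ e := by
        intro y hy hye
        exact he (Finset.mem_image.2 ⟨y, by simp [hy], hye⟩)
      refine ⟨Function.update c a e, ?_⟩
      intro x hx y hy hxy hr
      rw [Finset.mem_insert] at hx hy
      by_cases hxa : x = a
      · subst hxa
        have hya : y ≠ x := fun h => hxy h.symm
        rw [Function.update_self, Function.update_of_ne hya]
        exact (he' y hr).symm
      · by_cases hya : y = a
        · subst hya
          rw [Function.update_self, Function.update_of_ne hxa]
          exact he' x (hs _ _ hr)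
        · rw [Function.update_of_ne hxa, Function.update_of_ne hya]
          exact hc x (hx.resolve_left hxa) y (hy.resolve_left hya) hxy hr
  obtain ⟨c, hc⟩ := key Finset.univ
  exact ⟨c, fun x y => hc x (Finset.mem_univ _) y (Finset.mem_univ _)⟩

/-- Size of Hamming balls. -/
lemma ball_card (m d : ℕ) (hm : 1 ≤ m) (δ : ℝ) (x : Fin d → Fin m) :
    ((Finset.univ.filter (fun y : Fin d → Fin m => (hammingDist x y : ℝ) ≤ δ * d)).card : ℝ)
      ≤ 2 ^ d * (m : ℝ) ^ (δ * d) := by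
  have hm0 : (0 : ℝ) < m := by exact_mod_cast hm
  have hm1 : (1 : ℝ) ≤ m := by exact_mod_cast hm
  have hsum : ∑ y : Fin d → Fin m, ∏ i, (if x i = y i then (1 : ℝ) else (m : ℝ)⁻¹) ≤ 2 ^ d := by
    rw [← Fintype.prod_sum (fun i (u : Fin m) => if x i = u then (1 : ℝ) else (m : ℝ)⁻¹)]
    calc _ ≤ ∏ i : Fin d, (2 : ℝ) := by
          apply Finset.prod_le_prod
          · intro i _
            exact Finset.sum_nonneg fun u _ => by split_ifs <;> positivity
          · intro i _
            calc _ ≤ ∑ u : Fin m, ((if x i = u then (1 : ℝ) else 0) + (m : ℝ)⁻¹) := by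
                  apply Finset.sum_le_sum
                  intro u _
                  have : 0 < (m : ℝ)⁻¹ := by positivity
                  split_ifs <;> linarith
              _ = 2 := by
                  rw [Finset.sum_add_distrib]
                  simp
                  field_simp
                  norm_num
      _ = 2 ^ d := by simp
  have hprod : ∀ y : Fin d → Fin m,
      ∏ i, (if x i = y i then (1 : ℝ) else (m : ℝ)⁻¹) = ((m : ℝ)⁻¹) ^ (hammingDist x y) := by
    intro y
    rw [Finset.prod_ite]
    simp [hammingDist]
  have h1 : ((Finset.univ.filter
      (fun y : Fin d → Fin m => (hammingDist x y : ℝ) ≤ δ * d)).card : ℝ)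
      ≤ ∑ y : Fin d → Fin m, (m : ℝ) ^ (δ * d) * ((m : ℝ)⁻¹) ^ (hammingDist x y) := by
    rw [Finset.card_filter]
    push_cast
    apply Finset.sum_le_sum
    intro y _
    split_ifs with hy
    · rw [inv_pow, ← div_eq_mul_inv, one_le_div (by positivity), ← Real.rpow_natCast]
      exact Real.rpow_le_rpow_of_exponent_le hm1 hy
    · positivity
  refine h1.trans ?_
  rw [← Finset.mul_sum, mul_comm]
  apply mul_le_mul_of_nonneg_right _ (by positivity)
  simpa only [hprod] using hsum

/-- Chernoff bound, upper tail. -/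
lemma chernoff (m : ℕ) (hm : 1 ≤ m) (g : Fin m → ℝ) (hg : ∑ u, g u = 0) (ε : ℝ) (hε : 0 < ε) :
    ∃ ρ : ℝ, 0 < ρ ∧ ρ < 1 ∧ ∀ d : ℕ,
      ((Finset.univ.filter (fun v : Fin d → Fin m => ε * d < ∑ i, g (v i))).card : ℝ)
        ≤ (m : ℝ) ^ d * ρ ^ d := by
  have hm0 : (0 : ℝ) < m := by exact_mod_cast hm
  obtain ⟨B, hB1, hB⟩ : ∃ B : ℝ, 1 ≤ B ∧ ∀ u, |g u| ≤ B := by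
    refine ⟨1 + ∑ u, |g u|, ?_, ?_⟩
    · have := Finset.sum_nonneg (fun u (_ : u ∈ Finset.univ) => abs_nonneg (g u))
      linarith
    · intro u
      have := Finset.single_le_sum (f := fun u => |g u|)
        (fun u _ => abs_nonneg (g u)) (Finset.mem_univ u)
      linarith
  obtain ⟨s, hs0, hs1, hs2⟩ : ∃ s : ℝ, 0 < s ∧ s * B ≤ 1 ∧ s * B ^ 2 < ε := by
    refine ⟨min (1 / B) (ε / (2 * B ^ 2)), ?_, ?_, ?_⟩
    · apply lt_min <;> positivity
    · calc _ ≤ 1 / B * B := by gcongr; exact min_le_left _ _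
        _ = 1 := by field_simp
    · calc _ ≤ ε / (2 * B ^ 2) * B ^ 2 := by gcongr; exact min_le_right _ _
        _ = ε / 2 := by field_simp
        _ < ε := by linarith
  have hexp : ∑ u, Real.exp (s * g u) ≤ m * Real.exp (s ^ 2 * B ^ 2) := by
    calc _ ≤ ∑ u, (1 + s * g u + s ^ 2 * B ^ 2) := by
          apply Finset.sum_le_sum
          intro u _
          have h1 : |s * g u| ≤ s * B := by
            rw [abs_mul, abs_of_pos hs0]
            exact mul_le_mul_of_nonneg_left (hB u) hs0.le
          have h2 := Real.abs_exp_sub_one_sub_id_le (h1.trans hs1)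
          have h3 := (abs_le.1 h2).2
          have h4 : (s * g u) ^ 2 ≤ (s * B) ^ 2 := by
            rw [← sq_abs]
            exact pow_le_pow_left₀ (abs_nonneg _) h1 2
          nlinarith
      _ = m * (s ^ 2 * B ^ 2 + 1) := by
          rw [Finset.sum_add_distrib, Finset.sum_add_distrib, ← Finset.mul_sum, hg]
          simp
          ring
      _ ≤ _ := by
          gcongr
          exact Real.add_one_le_exp _
  refine ⟨Real.exp (s ^ 2 * B ^ 2 - s * ε), Real.exp_pos _, ?_, ?_⟩
  · rw [Real.exp_lt_one_iff]
    nlinarith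
  · intro d
    calc ((Finset.univ.filter (fun v : Fin d → Fin m => ε * d < ∑ i, g (v i))).card : ℝ)
        ≤ ∑ v : Fin d → Fin m, Real.exp (-(s * ε)) ^ d * ∏ i, Real.exp (s * g (v i)) := by
          rw [Finset.card_filter]
          push_cast
          apply Finset.sum_le_sum
          intro v _
          split_ifs with hv
          · rw [← Real.exp_sum, ← Real.exp_nat_mul, ← Real.exp_add, ← Finset.mul_sum]
            apply Real.one_le_exp
            nlinarith
          · exact mul_nonneg (by positivity) (Finset.prod_nonneg fun i _ => (Real.exp_pos _).le)
      _ = Real.exp (-(s * ε)) ^ d * (∑ u, Real.exp (s * g u)) ^ d := by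
          rw [← Finset.mul_sum, ← Fintype.prod_sum (fun (_ : Fin d) u => Real.exp (s * g u))]
          simp
      _ ≤ Real.exp (-(s * ε)) ^ d * (m * Real.exp (s ^ 2 * B ^ 2)) ^ d := by
          gcongr
      _ = _ := by
          rw [← mul_pow, ← mul_pow]
          congr 1
          rw [sub_eq_add_neg, Real.exp_add]
          ring

/-- Two-sided version for squares of digits. -/
lemma typical (m : ℕ) (hm : 1 ≤ m) (ε : ℝ) (hε : 0 < ε) :
    ∃ μ ρ : ℝ, 0 < ρ ∧ ρ < 1 ∧ ∀ d : ℕ,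
      ((Finset.univ.filter (fun v : Fin d → Fin m =>
        ¬ |∑ i, ((v i : ℕ) : ℝ) ^ 2 - μ * d| ≤ ε * d)).card : ℝ) ≤ 2 * ((m : ℝ) ^ d * ρ ^ d) := by
  have hm0 : (0 : ℝ) < m := by exact_mod_cast hm
  set μ : ℝ := (∑ u : Fin m, ((u : ℕ) : ℝ) ^ 2) / m with hμ
  have h0 : ∑ u : Fin m, (((u : ℕ) : ℝ) ^ 2 - μ) = 0 := by
    rw [Finset.sum_sub_distrib]
    simp only [Finset.sum_const, Finset.card_univ, Fintype.card_fin, nsmul_eq_mul]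
    rw [hμ, mul_div_cancel₀ _ hm0.ne', sub_self]
  have h0' : ∑ u : Fin m, (-(((u : ℕ) : ℝ) ^ 2 - μ)) = 0 := by
    rw [Finset.sum_neg_distrib, h0, neg_zero]
  obtain ⟨ρ₁, a1, b1, c1⟩ := chernoff m hm _ h0 ε hε
  obtain ⟨ρ₂, a2, b2, c2⟩ := chernoff m hm _ h0' ε hε
  refine ⟨μ, max ρ₁ ρ₂, lt_max_of_lt_left a1, max_lt b1 b2, ?_⟩
  intro d
  have e1 : (m : ℝ) ^ d * ρ₁ ^ d ≤ (m : ℝ) ^ d * (max ρ₁ ρ₂) ^ d := by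
    gcongr; exact le_max_left _ _
  have e2 : (m : ℝ) ^ d * ρ₂ ^ d ≤ (m : ℝ) ^ d * (max ρ₁ ρ₂) ^ d := by
    gcongr; exact le_max_right _ _
  have hsub : (Finset.univ.filter (fun v : Fin d → Fin m =>
        ¬ |∑ i, ((v i : ℕ) : ℝ) ^ 2 - μ * d| ≤ ε * d)) ⊆
      (Finset.univ.filter (fun v : Fin d → Fin m =>
        ε * d < ∑ i, (((v i : ℕ) : ℝ) ^ 2 - μ))) ∪
      (Finset.univ.filter (fun v : Fin d → Fin m =>
        ε * d < ∑ i, (-(((v i : ℕ) : ℝ) ^ 2 - μ)))) := by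
    intro v
    simp only [Finset.mem_filter, Finset.mem_univ, true_and, Finset.mem_union,
      Finset.sum_neg_distrib, Finset.sum_sub_distrib, Finset.sum_const, Finset.card_univ,
      Fintype.card_fin, nsmul_eq_mul, not_le, lt_abs]
    rw [mul_comm μ]
    exact id
  have := (Finset.card_le_card hsub).trans (Finset.card_union_le _ _)
  have h3 : ((Finset.univ.filter (fun v : Fin d → Fin m =>
        ¬ |∑ i, ((v i : ℕ) : ℝ) ^ 2 - μ * d| ≤ ε * d)).card : ℝ) ≤
      ((Finset.univ.filter (fun v : Fin d → Fin m =>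
        ε * d < ∑ i, (((v i : ℕ) : ℝ) ^ 2 - μ))).card : ℝ) +
      ((Finset.univ.filter (fun v : Fin d → Fin m =>
        ε * d < ∑ i, (-(((v i : ℕ) : ℝ) ^ 2 - μ)))).card : ℝ) := by exact_mod_cast this
  linarith [c1 d, c2 d]

/-- value of a digit vector -/
def dval (m d : ℕ) (v : Fin d → Fin m) : ℕ := ∑ i, (v i : ℕ) * m ^ (i : ℕ)

lemma dval_inj (m d : ℕ) : Function.Injective (dval m d) := by
  intro u v h
  apply (finFunctionFinEquiv (m := m) (n := d)).injective
  apply Fin.ext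
  rw [finFunctionFinEquiv_apply, finFunctionFinEquiv_apply]
  exact h

lemma exists_dval (m d a : ℕ) (h : a < m ^ d) : ∃ v, dval m d v = a := by
  refine ⟨finFunctionFinEquiv.symm ⟨a, h⟩, ?_⟩
  have := finFunctionFinEquiv_apply (finFunctionFinEquiv.symm (⟨a, h⟩ : Fin (m ^ d)))
  rw [Equiv.apply_symm_apply] at this
  exact this.symm

/-- same dyadic pattern of a digit -/
def samePat (m x y : ℕ) : Prop :=
  Nat.log 2 (x + 1) = Nat.log 2 (y + 1) ∧ Nat.log 2 (m - x) = Nat.log 2 (m - y) ∧ x % 2 = y % 2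

lemma log_two_lt (p q : ℕ) (hp : p ≠ 0) (h : Nat.log 2 p = Nat.log 2 q) : q < 2 * p := by
  have h1 := Nat.lt_pow_succ_log_self (b := 2) (by norm_num) q
  have h2 := Nat.pow_log_le_self 2 hp
  rw [← h, pow_succ] at h1
  omega

lemma samePat_bound (m x y : ℕ) (hy : y < m) (h : samePat m x y) :
    x ≤ 2 * y ∧ 2 * y < m + x := by
  obtain ⟨h1, h2, -⟩ := h
  have := log_two_lt (y + 1) (x + 1) (by omega) h1.symm
  have := log_two_lt (m - y) (m - x) (by omega) h2.symm
  omega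

lemma end_case (m d : ℕ) (u v w : Fin d → Fin m) (h : dval m d u + dval m d w = 2 * dval m d v)
    (hp : ∀ i, samePat m (u i) (v i)) : ∀ i, (u i : ℕ) + w i = 2 * v i := by
  let w' : Fin d → Fin m := fun i => ⟨2 * (v i : ℕ) - u i, by
    have := samePat_bound m _ _ (v i).2 (hp i); have := (u i).2; omega⟩
  have hw' : ∀ i, (u i : ℕ) + w' i = 2 * v i := by
    intro i
    have := samePat_bound m _ _ (v i).2 (hp i)
    simp only [w']
    omega
  have h2 : dval m d u + dval m d w' = 2 * dval m d v := by
    unfold dval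
    rw [← Finset.sum_add_distrib, Finset.mul_sum]
    apply Finset.sum_congr rfl
    intro i _
    rw [← add_mul, hw', mul_assoc]
  have h3 : w = w' := dval_inj m d (by omega)
  rw [h3]
  exact hw'

lemma mid_case (m d : ℕ) (u v w : Fin d → Fin m) (h : dval m d u + dval m d w = 2 * dval m d v)
    (hp : ∀ i, samePat m (u i) (w i)) : ∀ i, (u i : ℕ) + w i = 2 * v i := by
  let v' : Fin d → Fin m := fun i => ⟨((u i : ℕ) + w i) / 2, by
    have := (w i).2; have := (u i).2; omega⟩
  have hv' : ∀ i, (u i : ℕ) + w i = 2 * v' i := by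
    intro i
    have := (hp i).2.2
    simp only [v']
    omega
  have h2 : dval m d u + dval m d w = 2 * dval m d v' := by
    unfold dval
    rw [← Finset.sum_add_distrib, Finset.mul_sum]
    apply Finset.sum_congr rfl
    intro i _
    rw [← add_mul, hv', mul_assoc]
  have h3 : v = v' := dval_inj m d (by omega)
  rw [h3]
  exact hv'

lemma dist_small (m d : ℕ) (u v w : Fin d → Fin m) (h : ∀ i, (u i : ℕ) + w i = 2 * v i)
    (μ ε : ℝ)
    (hu : |∑ i, ((u i : ℕ) : ℝ) ^ 2 - μ * d| ≤ ε * d)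
    (hv : |∑ i, ((v i : ℕ) : ℝ) ^ 2 - μ * d| ≤ ε * d)
    (hw : |∑ i, ((w i : ℕ) : ℝ) ^ 2 - μ * d| ≤ ε * d) :
    (hammingDist u v : ℝ) ≤ 2 * ε * d := by
  have h1 : (hammingDist u v : ℝ) ≤ ∑ i, (((u i : ℕ) : ℝ) - ((v i : ℕ) : ℝ)) ^ 2 := by
    unfold hammingDist
    rw [Finset.card_filter]
    push_cast
    apply Finset.sum_le_sum
    intro i _
    split_ifs with hi
    · have h2 : ((u i : ℕ) : ℤ) - ((v i : ℕ) : ℤ) ≠ 0 := by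
        intro h3
        exact hi (Fin.ext (by omega))
      have h4 : (1 : ℤ) ≤ (((u i : ℕ) : ℤ) - ((v i : ℕ) : ℤ)) ^ 2 := by
        have := sq_nonneg (((u i : ℕ) : ℤ) - ((v i : ℕ) : ℤ))
        have := pow_ne_zero 2 h2
        omega
      exact_mod_cast h4
    · positivity
  have h2 : 2 * ∑ i, (((u i : ℕ) : ℝ) - ((v i : ℕ) : ℝ)) ^ 2 =
      ∑ i, ((u i : ℕ) : ℝ) ^ 2 + ∑ i, ((w i : ℕ) : ℝ) ^ 2 - 2 * ∑ i, ((v i : ℕ) : ℝ) ^ 2 := by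
    rw [Finset.mul_sum, Finset.mul_sum, ← Finset.sum_add_distrib, ← Finset.sum_sub_distrib]
    apply Finset.sum_congr rfl
    intro i _
    have h3 : ((w i : ℕ) : ℝ) = 2 * ((v i : ℕ) : ℝ) - ((u i : ℕ) : ℝ) := by
      have : ((u i : ℕ) : ℝ) + ((w i : ℕ) : ℝ) = 2 * ((v i : ℕ) : ℝ) := by exact_mod_cast h i
      linarith
    rw [h3]
    ring
  have := abs_le.1 hu
  have := abs_le.1 hv
  have := abs_le.1 hw
  linarith

lemma hamming_eq_of (m d : ℕ) (u v w : Fin d → Fin m) (h : ∀ i, (u i : ℕ) + w i = 2 * v i) :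
    hammingDist u w = hammingDist u v := by
  unfold hammingDist
  congr 1
  ext i
  have := h i
  simp only [Finset.mem_filter, Finset.mem_univ, true_and, ne_eq, Fin.ext_iff]
  omega

/-- The colouring on digit vectors. -/
lemma vec_col (j d : ℕ) (hd : 1 ≤ d) (δ : ℝ) (hδ : 0 < δ) :
    ∃ C : ℕ, (C : ℝ) ≤ (8 * ((j : ℝ) + 1) ^ 2) ^ d * ((2 ^ j : ℕ) : ℝ) ^ (δ * d) ∧
      ∃ c : (Fin d → Fin (2 ^ j)) → Fin C, ∀ x y, c x = c y → 
        (∀ i, samePat (2 ^ j) (x i) (y i)) ∧ (x ≠ y → δ * d < (hammingDist x y : ℝ)) := by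
  classical
  set m := 2 ^ j with hm
  have hm1 : 1 ≤ m := Nat.one_le_two_pow
  set D := ⌊(2 : ℝ) ^ d * (m : ℝ) ^ (δ * d)⌋₊ with hD
  obtain ⟨g, hg⟩ := greedy_col (V := Fin d → Fin m)
    (fun x y => (hammingDist x y : ℝ) ≤ δ * d)
    (fun x y h => by rw [hammingDist_comm]; exact h) D
    (fun x => Nat.le_floor (ball_card m d hm1 δ x))
  let W := (Fin d → Fin (j + 1) × Fin (j + 1) × Fin 2) × Fin (D + 1)
  let f : (Fin d → Fin m) → W := fun x =>
    (fun i => (⟨Nat.log 2 ((x i : ℕ) + 1), by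
        have : Nat.log 2 ((x i : ℕ) + 1) ≤ Nat.log 2 (2 ^ j) :=
          Nat.log_mono_right (by have := (x i).2; omega)
        rw [Nat.log_pow (by norm_num)] at this; omega⟩,
      ⟨Nat.log 2 (m - (x i : ℕ)), by
        have : Nat.log 2 (m - (x i : ℕ)) ≤ Nat.log 2 (2 ^ j) :=
          Nat.log_mono_right (by omega)
        rw [Nat.log_pow (by norm_num)] at this; omega⟩,
      ⟨(x i : ℕ) % 2, by omega⟩), g x)
  refine ⟨Fintype.card W, ?_, fun x => Fintype.equivFin W (f x), ?_⟩
  · have hcard : Fintype.card W = ((j + 1) * ((j + 1) * 2)) ^ d * (D + 1) := by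
      simp [W]
    rw [hcard]
    push_cast
    have h1 : (D : ℝ) ≤ 2 ^ d * (m : ℝ) ^ (δ * d) := Nat.floor_le (by positivity)
    have h2 : (1 : ℝ) ≤ 2 ^ d * (m : ℝ) ^ (δ * d) := by
      have a : (1 : ℝ) ≤ 2 ^ d := one_le_pow₀ (by norm_num)
      have b : (1 : ℝ) ≤ (m : ℝ) ^ (δ * d) :=
        Real.one_le_rpow (by exact_mod_cast hm1) (by positivity)
      nlinarith
    have h3 : (2 : ℝ) ≤ 2 ^ d := le_self_pow₀ (by norm_num) (by omega)
    have h4 : (D : ℝ) + 1 ≤ 2 ^ d * (2 ^ d * (m : ℝ) ^ (δ * d)) := by nlinarith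
    calc _ ≤ (((j : ℝ) + 1) * (((j : ℝ) + 1) * 2)) ^ d
            * (2 ^ d * (2 ^ d * (m : ℝ) ^ (δ * d))) := by gcongr
      _ = _ := by
          rw [← mul_assoc, ← mul_assoc, ← mul_pow, ← mul_pow, hm]
          push_cast
          congr 2
          ring
  · intro x y hxy
    have hf : f x = f y := (Fintype.equivFin W).injective hxy
    have hf1 := congrArg Prod.fst hf
    have hf2 : g x = g y := congrArg Prod.snd hf
    constructor
    · intro i
      have := congrFun hf1 i
      simp only [f, Prod.mk.injEq, Fin.mk.injEq] at this
      exact this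
    · intro hne
      by_contra hcon
      exact hg x y hne (not_lt.1 hcon) hf2

lemma exists_j (β : ℝ) (hβ : 0 < β) :
    ∃ j : ℕ, 1 ≤ j ∧ 8 * ((j : ℝ) + 1) ^ 2 ≤ ((2 ^ j : ℕ) : ℝ) ^ (β / 4) := by
  have hb : 1 < (2 : ℝ) ^ (β / 4) := Real.one_lt_rpow (by norm_num) (by positivity)
  have ht := tendsto_pow_const_div_const_pow_of_one_lt 2 hb
  have h1 := (ht.eventually (gt_mem_nhds (show (0 : ℝ) < 1 / 32 by norm_num))).and
    (Filter.eventually_ge_atTop 1)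
  obtain ⟨j, hj, hj1⟩ := h1.exists
  refine ⟨j, hj1, ?_⟩
  have hp : 0 < ((2 : ℝ) ^ (β / 4)) ^ j := by positivity
  rw [div_lt_iff₀ hp] at hj
  have e : ((2 ^ j : ℕ) : ℝ) ^ (β / 4) = ((2 : ℝ) ^ (β / 4)) ^ j := by
    push_cast
    rw [← Real.rpow_natCast, ← Real.rpow_natCast, ← Real.rpow_mul (by norm_num),
      ← Real.rpow_mul (by norm_num), mul_comm]
  rw [e]
  have : (1 : ℝ) ≤ j := by exact_mod_cast hj1
  nlinarith

/-- main theorem: For every `β > 0` there is `α < 1` such that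
for all sufficiently large `n`, some `A ⊆ {1,…,n}` with `|A| ≥ n - n^α` admits
a coloring with at most `n^β` colors under which every 3-term arithmetic
progression in `A` is rainbow. -/
theorem stmt_12 :
    ∀ β : ℝ, 0 < β → ∃ α : ℝ, α < 1 ∧ ∃ N : ℕ, ∀ n : ℕ, N ≤ n →
      ∃ A : Finset ℕ, A ⊆ Finset.Icc 1 n ∧
        (n : ℝ) - (n : ℝ) ^ α ≤ (A.card : ℝ) ∧
        ∃ c : ℕ → ℕ,
          (∀ a ∈ A, c a ∈ Finset.Icc 1 ⌊(n : ℝ) ^ β⌋₊) ∧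
          (∀ a t : ℕ, t ≠ 0 → a ∈ A → a + t ∈ A → a + 2 * t ∈ A →
            c a ≠ c (a + t) ∧ c a ≠ c (a + 2 * t) ∧ c (a + t) ≠ c (a + 2 * t)) := by
  intro β hβ
  classical
  obtain ⟨j, hj1, hj⟩ := exists_j β hβ
  set m : ℕ := 2 ^ j with hmdef
  have hm2 : 2 ≤ m := le_self_pow₀ (by norm_num) (by omega)
  have hmR : (2 : ℝ) ≤ m := by exact_mod_cast hm2
  have hm0 : (0 : ℝ) < m := by linarith
  obtain ⟨μ, ρ, hρ0, hρ1, htyp⟩ := typical m (by omega) (β / 16) (by positivity)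
  obtain ⟨γ, hγ0, hγ⟩ : ∃ γ : ℝ, 0 < γ ∧ (m : ℝ) ^ γ = ρ⁻¹ :=
    ⟨Real.logb m ρ⁻¹, Real.logb_pos (by linarith) ((one_lt_inv₀ hρ0).2 hρ1),
      Real.rpow_logb hm0 (by linarith) (by positivity)⟩
  obtain ⟨N, hN⟩ : ∃ N : ℕ, ∀ n : ℕ, N ≤ n → 2 * (m : ℝ) ≤ (n : ℝ) ^ (γ / 2) := by
    have := ((tendsto_rpow_atTop (show 0 < γ / 2 by positivity)).comp
      tendsto_natCast_atTop_atTop).eventually_ge_atTop (2 * (m : ℝ))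
    exact Filter.eventually_atTop.1 this
  refine ⟨1 - γ / 2, by linarith, max N m, ?_⟩
  intro n hn
  have hnN := hN n (le_of_max_le_left hn)
  have hnm : m ≤ n := le_of_max_le_right hn
  have hn0 : n ≠ 0 := by omega
  have hnR : (0 : ℝ) < n := by exact_mod_cast Nat.pos_of_ne_zero hn0
  set d := Nat.log m n + 1 with hd
  have hd2 : 2 ≤ d := by
    have : 0 < Nat.log m n := Nat.log_pos (by omega) hnm
    omega
  have hnd : n < m ^ d := Nat.lt_pow_succ_log_self (by omega) n
  have hdn : m ^ (d - 1) ≤ n := by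
    simpa [hd] using Nat.pow_log_le_self m hn0
  obtain ⟨C, hC, col, hcol⟩ := vec_col j d (by omega) (β / 4) (by positivity)
  -- digit vectors
  have hdig : ∀ a, ∃ v : Fin d → Fin m, a ≤ n → dval m d v = a := by
    intro a
    by_cases ha : a ≤ n
    · obtain ⟨v, hv⟩ := exists_dval m d a (by omega)
      exact ⟨v, fun _ => hv⟩
    · exact ⟨fun _ => ⟨0, by omega⟩, fun h => absurd h ha⟩
  choose dg hdg using hdig
  let T : (Fin d → Fin m) → Prop := fun v =>
    |∑ i, ((v i : ℕ) : ℝ) ^ 2 - μ * d| ≤ (β / 16) * d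
  refine ⟨(Finset.Icc 1 n).filter (fun a => T (dg a)), Finset.filter_subset _ _, ?_,
    fun a => (col (dg a) : ℕ) + 1, ?_, ?_⟩
  · -- size
    have hbad : ((Finset.Icc 1 n).filter (fun a => ¬ T (dg a))).card ≤
        (Finset.univ.filter (fun v : Fin d → Fin m => ¬ T v)).card := by
      apply Finset.card_le_card_of_injOn dg
      · intro a ha
        simp only [Finset.coe_filter, Set.mem_ofPred_eq] at ha
        simpa using ha.2
      · intro a ha b hb hab
        simp only [Finset.coe_filter, Set.mem_ofPred_eq, Finset.mem_Icc] at ha hb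
        rw [← hdg a ha.1.2, ← hdg b hb.1.2, hab]
    have hsplit := Finset.card_filter_add_card_filter_not (s := Finset.Icc 1 n)
      (fun a => T (dg a))
    rw [Nat.card_Icc, Nat.add_sub_cancel] at hsplit
    have hsplit' : (((Finset.Icc 1 n).filter (fun a => T (dg a))).card : ℝ) +
      (((Finset.Icc 1 n).filter (fun a => ¬ T (dg a))).card : ℝ) = n := by exact_mod_cast hsplit
    have hbad' : (((Finset.Icc 1 n).filter (fun a => ¬ T (dg a))).card : ℝ) ≤
        2 * ((m : ℝ) ^ d * ρ ^ d) := 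
      (Nat.cast_le.2 hbad).trans (by convert htyp d)
    have h1 : (m : ℝ) ^ d ≤ m * n := by
      have : m ^ d ≤ m * n := by
        calc m ^ d = m * m ^ (d - 1) := by rw [← pow_succ']; congr 1
          _ ≤ m * n := Nat.mul_le_mul_left _ hdn
      exact_mod_cast this
    have h2 : (n : ℝ) ^ γ * ρ ^ d ≤ 1 := by
      have h3 : (n : ℝ) ^ γ ≤ (ρ⁻¹) ^ d := by
        calc (n : ℝ) ^ γ ≤ ((m : ℝ) ^ d) ^ γ :=
              Real.rpow_le_rpow hnR.le (by exact_mod_cast hnd.le) hγ0.le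
          _ = (ρ⁻¹) ^ d := by
              rw [← hγ, ← Real.rpow_natCast, ← Real.rpow_natCast, ← Real.rpow_mul hm0.le,
                ← Real.rpow_mul hm0.le, mul_comm]
      calc (n : ℝ) ^ γ * ρ ^ d ≤ (ρ⁻¹) ^ d * ρ ^ d := by gcongr
        _ = 1 := by rw [← mul_pow, inv_mul_cancel₀ hρ0.ne', one_pow]
    have h4 : (n : ℝ) ^ γ = (n : ℝ) ^ (γ / 2) * (n : ℝ) ^ (γ / 2) := by
      rw [← Real.rpow_add hnR]; congr 1; ring
    have h5 : (n : ℝ) ^ (1 - γ / 2) * (n : ℝ) ^ (γ / 2) = n := by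
      rw [← Real.rpow_add hnR]; simp
    have hq : 0 < (n : ℝ) ^ (γ / 2) := by positivity
    have h6 : 2 * ((m : ℝ) ^ d * ρ ^ d) ≤ (n : ℝ) ^ (1 - γ / 2) := by
      set q := (n : ℝ) ^ (γ / 2)
      set p := (n : ℝ) ^ (1 - γ / 2) with hp
      have hp0 : 0 < p := by positivity
      calc 2 * ((m : ℝ) ^ d * ρ ^ d) ≤ 2 * ((m * n) * ρ ^ d) := by gcongr
        _ = (2 * m) * (p * q * ρ ^ d) := by rw [h5]; ring
        _ ≤ q * (p * q * ρ ^ d) := by gcongr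
        _ = p * ((n : ℝ) ^ γ * ρ ^ d) := by rw [h4]; ring
        _ ≤ p * 1 := by gcongr
        _ = p := mul_one p
    linarith
  · -- number of colours
    intro a _
    have hCn : C ≤ ⌊(n : ℝ) ^ β⌋₊ := by
      apply Nat.le_floor
      refine hC.trans ?_
      calc (8 * ((j : ℝ) + 1) ^ 2) ^ d * (m : ℝ) ^ (β / 4 * d)
          ≤ ((m : ℝ) ^ (β / 4)) ^ d * (m : ℝ) ^ (β / 4 * d) := by gcongr
        _ = (m : ℝ) ^ (β / 2 * d) := by
            rw [← Real.rpow_natCast, ← Real.rpow_mul hm0.le, ← Real.rpow_add hm0]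
            congr 1; ring
        _ ≤ (m : ℝ) ^ (((d - 1 : ℕ) : ℝ) * β) := by
            apply Real.rpow_le_rpow_of_exponent_le (by linarith)
            rw [Nat.cast_sub (by omega)]
            have : (2 : ℝ) ≤ d := by exact_mod_cast hd2
            push_cast
            nlinarith
        _ = ((m : ℝ) ^ (d - 1)) ^ β := by
            rw [Real.rpow_mul hm0.le, Real.rpow_natCast]
        _ ≤ (n : ℝ) ^ β := by
            apply Real.rpow_le_rpow (by positivity) _ hβ.le
            exact_mod_cast hdn
    have := (col (dg a)).2
    rw [Finset.mem_Icc]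
    exact ⟨Nat.succ_le_succ (Nat.zero_le _), le_trans (Nat.succ_le_of_lt this) hCn⟩
  · -- rainbow
    intro a t ht h1 h2 h3
    simp only [Finset.mem_filter, Finset.mem_Icc] at h1 h2 h3
    obtain ⟨⟨-, a1⟩, t1⟩ := h1
    obtain ⟨⟨-, a2⟩, t2⟩ := h2
    obtain ⟨⟨-, a3⟩, t3⟩ := h3
    have e1 := hdg _ a1
    have e2 := hdg _ a2
    have e3 := hdg _ a3
    set u := dg a
    set v := dg (a + t)
    set w := dg (a + 2 * t)
    have hsum : dval m d u + dval m d w = 2 * dval m d v := by omega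
    have hsum' : dval m d w + dval m d u = 2 * dval m d v := by omega
    have huv : u ≠ v := by intro h; rw [h] at e1; omega
    have huw : u ≠ w := by intro h; rw [h] at e1; omega
    have hvw : w ≠ v := by intro h; rw [h] at e3; omega
    have hd0 : (0 : ℝ) < d := by positivity
    have hpos : 0 < β * d := by positivity
    refine ⟨?_, ?_, ?_⟩
    · intro hc
      obtain ⟨p1, p2⟩ := hcol u v (Fin.ext (Nat.succ.inj hc))
      have p3 := dist_small m d u v w (end_case m d u v w hsum p1) μ _ t1 t2 t3
      have := p2 huv
      linarith
    · intro hc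
      obtain ⟨p1, p2⟩ := hcol u w (Fin.ext (Nat.succ.inj hc))
      have p4 := mid_case m d u v w hsum p1
      have p3 := dist_small m d u v w p4 μ _ t1 t2 t3
      have := p2 huw
      rw [hamming_eq_of m d u v w p4] at this
      linarith
    · intro hc
      obtain ⟨p1, p2⟩ := hcol w v (Fin.ext (Nat.succ.inj hc.symm))
      have p3 := dist_small m d w v u (end_case m d w v u hsum' p1) μ _ t3 t2 t1
      have := p2 hvw
      linarith
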